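/- arXiv:2411.01085 — 4 statements merged into one kernel-verified Lean document; each statement's English description precedes it below -/
import Mathlib

section
/- For every natural number n ≥ 1 and every ℂ-linear map d from the matrix algebra M_n(ℂ) to itself satisfying the Leibniz rule d(ab) = d(a)·b + a·d(b) for all a, b ∈ M_n(ℂ), there exists a matrix D ∈ M_n(ℂ) such that d(a) = D·a − a·D for all a ∈ M_n(ℂ). -/
/-! Matrix algebras are separable: writing `Eᵢⱼ` for the matrix units and fixing an index `o`, the
element `e = ∑ᵢ Eᵢₒ ⊗ Eₒᵢ` multiplies out to `1` and satisfies `a e = e a` for the outer bimodule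
structure. For any derivation `d`, apply `x ⊗ y ↦ d x · y` to this identity and call `D` the image
of `e`: the Leibniz rule turns the left-hand side into `d a + a D`, and the right-hand side is
`D a`, so `d` is the commutator with `D`. -/

open MulOpposite
open scoped TensorProduct

section Separability

variable {R A M : Type*} [CommSemiring R] [Semiring A] [Algebra R A]

/-- A separability idempotent of the `R`-algebra `A`: an element of `A ⊗[R] A` that multiplies out
to `1` and on which the outer left and right actions of `A` agree. The outer actions are encoded as
multiplication by `a ⊗ₜ 1` on the left and by `1 ⊗ₜ a` on the right in the tensor product
algebra. -/
structure IsSeparabilityIdempotent (e : A ⊗[R] A) : Prop where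
  mul'_eq_one : LinearMap.mul' R A e = 1
  tmul_one_mul_eq_mul_one_tmul (a : A) : (a ⊗ₜ[R] 1) * e = e * (1 ⊗ₜ[R] a)

section Contraction

variable [AddCommMonoid M] [Module R M] [Module Aᵐᵒᵖ M] [IsScalarTower R Aᵐᵒᵖ M]

/-- The linear map `x ⊗ y ↦ d x · y` induced by a linear map `d` into a right `A`-module, with right
modules encoded as modules over `Aᵐᵒᵖ`. A derivation `d` is the commutator with its value at a
separability idempotent. -/
def rightContraction (d : A →ₗ[R] M) : A ⊗[R] A →ₗ[R] M :=
  TensorProduct.lift <|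
    ((Algebra.lsmul R R M).toLinearMap ∘ₗ (opLinearEquiv R).toLinearMap).flip ∘ₗ d

@[simp]
theorem rightContraction_tmul (d : A →ₗ[R] M) (x y : A) :
    rightContraction d (x ⊗ₜ[R] y) = op y • d x :=
  rfl

theorem rightContraction_mul_one_tmul (d : A →ₗ[R] M) (t : A ⊗[R] A) (a : A) :
    rightContraction d (t * (1 ⊗ₜ[R] a)) = op a • rightContraction d t := by
  induction t with
  | zero => simp only [zero_mul, map_zero, smul_zero]
  | add s t hs ht => simp only [add_mul, map_add, smul_add, hs, ht]
  | tmul x y =>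
    simp only [Algebra.TensorProduct.tmul_mul_tmul, mul_one, rightContraction_tmul, op_mul,
      mul_smul]

theorem rightContraction_tmul_one_mul [Module A M] [SMulCommClass A Aᵐᵒᵖ M] {d : A →ₗ[R] M}
    (leibniz : ∀ a b, d (a * b) = op b • d a + a • d b) (a : A) (t : A ⊗[R] A) :
    rightContraction d ((a ⊗ₜ[R] 1) * t) =
      op (LinearMap.mul' R A t) • d a + a • rightContraction d t := by
  induction t with
  | zero => simp only [mul_zero, map_zero, op_zero, zero_smul, smul_zero, add_zero]
  | add s t hs ht =>
    simp only [mul_add, map_add, op_add, add_smul, smul_add, hs, ht]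
    abel
  | tmul x y =>
    simp only [Algebra.TensorProduct.tmul_mul_tmul, one_mul, rightContraction_tmul, leibniz,
      smul_add, LinearMap.mul'_apply, op_mul, mul_smul, smul_comm a (op y)]

end Contraction

theorem IsSeparabilityIdempotent.derivation_eq_commutator [AddCommGroup M] [Module R M]
    [Module A M] [Module Aᵐᵒᵖ M] [IsScalarTower R Aᵐᵒᵖ M] [SMulCommClass A Aᵐᵒᵖ M]
    {e : A ⊗[R] A} (he : IsSeparabilityIdempotent e) {d : A →ₗ[R] M}
    (leibniz : ∀ a b, d (a * b) = op b • d a + a • d b) (a : A) :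
    d a = op a • rightContraction d e - a • rightContraction d e := by
  rw [eq_sub_iff_add_eq]
  calc d a + a • rightContraction d e
      = rightContraction d ((a ⊗ₜ[R] 1) * e) := by
        rw [rightContraction_tmul_one_mul leibniz, he.mul'_eq_one, op_one, one_smul]
    _ = op a • rightContraction d e := by
        rw [he.tmul_one_mul_eq_mul_one_tmul, rightContraction_mul_one_tmul]

end Separability

theorem mul_single_one_eq_sum_smul_single {l m n R : Type*} [NonAssocSemiring R]
    [Fintype l] [Fintype m] [DecidableEq l] [DecidableEq m] [DecidableEq n]
    (a : Matrix l m R) (i : m) (j : n) :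
    a * Matrix.single i j (1 : R) = ∑ k, a k i • Matrix.single k j (1 : R) := by
  ext p q
  simp [Matrix.mul_apply, Matrix.sum_apply, Matrix.single_apply, ite_and]

theorem single_one_mul_eq_sum_smul_single {l m n R : Type*} [NonAssocSemiring R]
    [Fintype m] [Fintype n] [DecidableEq l] [DecidableEq m] [DecidableEq n]
    (i : l) (j : m) (a : Matrix m n R) :
    Matrix.single i j (1 : R) * a = ∑ k, a j k • Matrix.single i k (1 : R) := by
  ext p q
  simp [Matrix.mul_apply, Matrix.sum_apply, Matrix.single_apply, ite_and]

theorem isSeparabilityIdempotent_sum_single_tmul_single {m R : Type*} [Fintype m]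
    [DecidableEq m] [CommSemiring R] (o : m) :
    IsSeparabilityIdempotent
      (∑ i, Matrix.single i o (1 : R) ⊗ₜ[R] Matrix.single o i (1 : R)) where
  mul'_eq_one := by
    simp only [map_sum, LinearMap.mul'_apply, Matrix.single_mul_single_same, mul_one,
      Matrix.sum_single_one]
  tmul_one_mul_eq_mul_one_tmul a := by
    simp only [Finset.mul_sum, Finset.sum_mul, Algebra.TensorProduct.tmul_mul_tmul, one_mul,
      mul_one, mul_single_one_eq_sum_smul_single, single_one_mul_eq_sum_smul_single,
      TensorProduct.sum_tmul, TensorProduct.tmul_sum, TensorProduct.smul_tmul]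
    exact Finset.sum_comm

theorem exists_isSeparabilityIdempotent_matrix (m R : Type*) [Fintype m] [DecidableEq m]
    [CommSemiring R] :
    ∃ e : Matrix m m R ⊗[R] Matrix m m R, IsSeparabilityIdempotent e := by
  rcases isEmpty_or_nonempty m with _ | ⟨⟨o⟩⟩
  · exact ⟨0, Subsingleton.elim _ _, fun _ => by rw [mul_zero, zero_mul]⟩
  · exact ⟨_, isSeparabilityIdempotent_sum_single_tmul_single o⟩

theorem stmt_0_general {m R M : Type*} [Fintype m] [DecidableEq m] [CommSemiring R]
    [AddCommGroup M] [Module R M] [Module (Matrix m m R) M] [Module (Matrix m m R)ᵐᵒᵖ M]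
    [IsScalarTower R (Matrix m m R)ᵐᵒᵖ M] [SMulCommClass (Matrix m m R) (Matrix m m R)ᵐᵒᵖ M]
    (d : Matrix m m R →ₗ[R] M)
    (leibniz : ∀ a b, d (a * b) = op b • d a + a • d b) :
    ∃ D : M, ∀ a, d a = op a • D - a • D := by
  obtain ⟨e, he⟩ := exists_isSeparabilityIdempotent_matrix m R
  exact ⟨rightContraction d e, he.derivation_eq_commutator leibniz⟩

/-- Every derivation of the matrix algebra `Mₙ(ℂ)` (n ≥ 1) is inner:
it is given by the commutator with some matrix `D`. -/
theorem stmt_0 (n : ℕ) (hn : 1 ≤ n)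
    (d : Matrix (Fin n) (Fin n) ℂ →ₗ[ℂ] Matrix (Fin n) (Fin n) ℂ)
    (hLeibniz : ∀ a b : Matrix (Fin n) (Fin n) ℂ, d (a * b) = d a * b + a * d b) :
    ∃ D : Matrix (Fin n) (Fin n) ℂ, ∀ a : Matrix (Fin n) (Fin n) ℂ,
      d a = D * a - a * D :=
  stmt_0_general d hLeibniz
end

section
/- Let n ≥ 1 and let d : M_n(ℂ) → M_n(ℂ) be a ℂ-linear map satisfying the Leibniz rule d(ab) = d(a)·b + a·d(b) for all a, b, and satisfying d(aᴴ) = −(d(a))ᴴ for all a, where aᴴ denotes the conjugate transpose. Then there exists a Hermitian matrix D ∈ M_n(ℂ) (i.e. Dᴴ = D) such that d(a) = D·a − a·D for all a ∈ M_n(ℂ). -/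
open Matrix

/-!
The element `e = ∑ k, E k z ⊗ E z k` of `Mₙ(R) ⊗ Mₙ(R)` multiplies out to `1` and satisfies
`(a ⊗ 1) e = e (1 ⊗ a)`. Applying `x ⊗ y ↦ d x * y` to both sides of this identity gives
`d a + a B = B a`, where `B` is the image of `e`, so `d` is the commutator with `B`.

Subtracting a scalar from `B` does not change the commutator, so we may arrange `B z z = 0`.
Compatibility with the involution makes `Bᴴ` another implementing matrix; `B - Bᴴ` is then central,
hence scalar, and its `(z, z)` entry vanishes, so `B = Bᴴ`.
-/

open scoped TensorProduct

section Separability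

variable {R A : Type*} [CommSemiring R]

/-- A separability idempotent of the `R`-algebra `A`: an element of `A ⊗[R] A` which multiplies out
to `1` and is central for the outer `A`-bimodule structure. It makes every derivation of `A` inner.
The two outer actions are written as multiplications by `a ⊗ₜ 1` on the left and by `1 ⊗ₜ a` on the
right. -/
structure IsSeparabilityIdempotent_s1 [Semiring A] [Algebra R A] (e : A ⊗[R] A) : Prop where
  mul'_eq_one : LinearMap.mul' R A e = 1
  tmul_one_mul_comm : ∀ a : A, (a ⊗ₜ 1) * e = e * (1 ⊗ₜ a)

lemma mul'_rTensor_mul_one_tmul [Semiring A] [Algebra R A] (f : A →ₗ[R] A) (t : A ⊗[R] A) (a : A) :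
    LinearMap.mul' R A (f.rTensor A (t * (1 ⊗ₜ a))) = LinearMap.mul' R A (f.rTensor A t) * a := by
  induction t with
  | zero => simp
  | tmul x y => simp [mul_assoc]
  | add s t hs ht => simp only [add_mul, map_add, hs, ht]

lemma mul'_rTensor_tmul_one_mul_of_leibniz [Semiring A] [Algebra R A] {d : A →ₗ[R] A}
    (hd : ∀ a b, d (a * b) = d a * b + a * d b) (t : A ⊗[R] A) (a : A) :
    LinearMap.mul' R A (d.rTensor A ((a ⊗ₜ 1) * t)) =
      d a * LinearMap.mul' R A t + a * LinearMap.mul' R A (d.rTensor A t) := by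
  induction t with
  | zero => simp
  | tmul x y => simp [hd, add_mul, mul_assoc]
  | add s t hs ht =>
    simp only [mul_add, map_add, hs, ht]
    exact add_add_add_comm _ _ _ _

theorem IsSeparabilityIdempotent_s1.map_eq_commutator_of_leibniz [Ring A] [Algebra R A] {e : A ⊗[R] A}
    (he : IsSeparabilityIdempotent_s1 e) {d : A →ₗ[R] A}
    (hd : ∀ a b, d (a * b) = d a * b + a * d b) (a : A) :
    d a = LinearMap.mul' R A (d.rTensor A e) * a - a * LinearMap.mul' R A (d.rTensor A e) := by
  rw [eq_sub_iff_add_eq, ← mul'_rTensor_mul_one_tmul, ← he.tmul_one_mul_comm,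
    mul'_rTensor_tmul_one_mul_of_leibniz hd, he.mul'_eq_one, mul_one]

end Separability

lemma map_eq_star_commutator_of_map_star {A : Type*} [NonUnitalRing A] [StarRing A]
    {d : A → A} {b : A} (hb : ∀ a, d a = b * a - a * b)
    (hStar : ∀ a, d (star a) = -star (d a)) (a : A) :
    d a = star b * a - a * star b := by
  calc d a = -star (d (star a)) := by rw [← hStar, star_star]
    _ = star b * a - a * star b := by simp [hb]

section Matrix

variable {n R : Type*} [Fintype n]

theorem isSeparabilityIdempotent_sum_single_tmul_single_s1 [DecidableEq n] [CommSemiring R] (z : n) :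
    IsSeparabilityIdempotent_s1 (R := R) (∑ k, single k z (1 : R) ⊗ₜ single z k (1 : R)) where
  mul'_eq_one := by simp [sum_single_one]
  tmul_one_mul_comm a := by
    induction a using Matrix.induction_on' with
    | h_zero => simp
    | h_add a b ha hb =>
      simp only [TensorProduct.add_tmul, TensorProduct.tmul_add, add_mul, mul_add, ha, hb]
    | h_std_basis i j c =>
      rw [Finset.mul_sum, Finset.sum_mul]
      calc ∑ k, single i j c ⊗ₜ 1 * single k z (1 : R) ⊗ₜ single z k (1 : R)
          = single i z c ⊗ₜ[R] single z j (1 : R) := by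
            rw [Finset.sum_eq_single_of_mem j (Finset.mem_univ j) fun k _ hk ↦ by simp [hk.symm]]
            simp
        _ = single i z (1 : R) ⊗ₜ single z j c := by
            simpa [smul_single] using
              TensorProduct.smul_tmul c (single i z (1 : R)) (single z j (1 : R))
        _ = ∑ k, single k z (1 : R) ⊗ₜ single z k (1 : R) * 1 ⊗ₜ single i j c := by
            rw [Finset.sum_eq_single_of_mem i (Finset.mem_univ i) fun k _ hk ↦ by simp [hk]]
            simp

lemma eq_of_commutator_eq_of_apply_eq [Ring R] {B C : Matrix n n R}
    (h : ∀ a, B * a - a * B = C * a - a * C) {z : n} (hz : B z z = C z z) : B = C := by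
  classical
  have hcomm (a : Matrix n n R) : Commute a (B - C) := by
    rw [commute_iff_eq, mul_sub, sub_mul, sub_eq_sub_iff_sub_eq_sub.mp (h a)]
  obtain ⟨r, hr⟩ := mem_range_scalar_of_commute_single fun i j _ ↦ hcomm (single i j 1)
  have hr0 : r = 0 := by simpa [hz] using congr_fun₂ hr z z
  rw [← sub_eq_zero, ← hr, hr0, map_zero]

theorem exists_commutator_apply_eq_zero [CommRing R] {d : Matrix n n R →ₗ[R] Matrix n n R}
    (hd : ∀ a b, d (a * b) = d a * b + a * d b) (z : n) :
    ∃ B : Matrix n n R, B z z = 0 ∧ ∀ a, d a = B * a - a * B := by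
  classical
  have he := isSeparabilityIdempotent_sum_single_tmul_single_s1 (R := R) z
  obtain ⟨B, hB⟩ : ∃ B, ∀ a, d a = B * a - a * B := ⟨_, he.map_eq_commutator_of_leibniz hd⟩
  refine ⟨B - scalar n (B z z), by simp, fun a ↦ ?_⟩
  rw [hB, sub_mul, mul_sub, (scalar_commute (B z z) (Commute.all _) a).eq, sub_sub_sub_cancel_right]

theorem stmt_1_general [CommRing R] [StarRing R] (d : Matrix n n R →ₗ[R] Matrix n n R)
    (hLeibniz : ∀ a b, d (a * b) = d a * b + a * d b) (hStar : ∀ a, d aᴴ = -(d a)ᴴ) :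
    ∃ D : Matrix n n R, Dᴴ = D ∧ ∀ a, d a = D * a - a * D := by
  rcases isEmpty_or_nonempty n with _ | ⟨⟨z⟩⟩
  · exact ⟨0, Subsingleton.elim _ _, fun _ ↦ Subsingleton.elim _ _⟩
  obtain ⟨B, hBz, hB⟩ := exists_commutator_apply_eq_zero hLeibniz z
  have hBstar (a) : d a = Bᴴ * a - a * Bᴴ := map_eq_star_commutator_of_map_star hB hStar a
  refine ⟨B, eq_of_commutator_eq_of_apply_eq (z := z) (fun a ↦ ?_) ?_, hB⟩
  · rw [← hBstar, hB]
  · rw [conjTranspose_apply, hBz, star_zero]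

end Matrix

/-- A derivation of `Mₙ(ℂ)` (n ≥ 1) compatible with the conjugate-transpose
involution (`d(aᴴ) = -(d a)ᴴ`) is the commutator with a Hermitian matrix `D`. -/
theorem stmt_1 (n : ℕ) (hn : 1 ≤ n)
    (d : Matrix (Fin n) (Fin n) ℂ →ₗ[ℂ] Matrix (Fin n) (Fin n) ℂ)
    (hLeibniz : ∀ a b : Matrix (Fin n) (Fin n) ℂ, d (a * b) = d a * b + a * d b)
    (hStar : ∀ a : Matrix (Fin n) (Fin n) ℂ, d aᴴ = -(d a)ᴴ) :
    ∃ D : Matrix (Fin n) (Fin n) ℂ, Dᴴ = D ∧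
      ∀ a : Matrix (Fin n) (Fin n) ℂ, d a = D * a - a * D :=
  stmt_1_general d hLeibniz hStar
end

section
/- Let A be a unital complex normed ring (e.g. a C*-algebra) and let p ∈ A satisfy p² = p and ‖p‖ ≤ 1. Then for all D, a ∈ A, ‖p(Da − aD)p − ((pDp)(pap) − (pap)(pDp))‖ ≤ 2·‖Dp − pD‖·‖a‖. -/
/-! For an idempotent `p`, the compression `φ(a) = p a p` is not multiplicative, but its defect can
be written with a commutator on either factor: `φ(xy) - φ(x)φ(y) = -p[x,p]yp = px[y,p]p`.
Taking the first form for `Da` and the second for `aD`, both defects contain `[D,p]`. -/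

section Algebra

/-- The compression `a ↦ p a p` by `p`, bundled as an additive map because it is not multiplicative
in general, even when `p` is idempotent. -/
def compression {A : Type*} [NonUnitalNonAssocSemiring A] (p : A) : A →+ A :=
  (AddMonoidHom.mulRight p).comp (AddMonoidHom.mulLeft p)

theorem compression_apply {A : Type*} [NonUnitalNonAssocSemiring A] (p a : A) :
    compression p a = p * a * p := rfl

theorem compression_mul_compression {A : Type*} [NonUnitalSemiring A] {p : A}
    (hp : IsIdempotentElem p) (x y : A) :
    compression p x * compression p y = p * x * p * y * p := by
  simp only [compression_apply, mul_assoc, hp.mul_self_mul]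

variable {A : Type*} [NonUnitalRing A] {p : A}

theorem compression_mul_sub_eq_neg_compression_lie_mul (hp : IsIdempotentElem p) (x y : A) :
    compression p (x * y) - compression p x * compression p y = -compression p (⁅x, p⁆ * y) := by
  rw [compression_mul_compression hp]
  simp only [compression_apply, Ring.lie_def, sub_mul, mul_sub, mul_assoc, hp.mul_self_mul, neg_sub]

theorem compression_mul_sub_eq_compression_mul_lie (hp : IsIdempotentElem p) (x y : A) :
    compression p (x * y) - compression p x * compression p y = compression p (x * ⁅y, p⁆) := by
  rw [compression_mul_compression hp]
  simp only [compression_apply, Ring.lie_def, sub_mul, mul_sub, mul_assoc, hp.eq]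

theorem compression_lie_sub_lie_compression (hp : IsIdempotentElem p) (x y : A) :
    compression p ⁅x, y⁆ - ⁅compression p x, compression p y⁆ =
      -compression p (⁅x, p⁆ * y + y * ⁅x, p⁆) :=
  calc
    _ = (compression p (x * y) - compression p x * compression p y) -
        (compression p (y * x) - compression p y * compression p x) := by
      rw [Ring.lie_def, Ring.lie_def, map_sub, sub_sub_sub_comm]
    _ = -compression p (⁅x, p⁆ * y) - compression p (y * ⁅x, p⁆) := by
      rw [compression_mul_sub_eq_neg_compression_lie_mul hp,
        compression_mul_sub_eq_compression_mul_lie hp]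
    _ = _ := by rw [map_add, neg_add, sub_eq_add_neg]

end Algebra

section Norm

variable {A : Type*} [NonUnitalSeminormedRing A]

theorem norm_compression_le (p a : A) : ‖compression p a‖ ≤ ‖p‖ ^ 2 * ‖a‖ :=
  calc
    ‖p * a * p‖ ≤ ‖p‖ * ‖a‖ * ‖p‖ := norm_mul₃_le
    _ = ‖p‖ ^ 2 * ‖a‖ := by ring

theorem norm_mul_add_mul_swap_le (x y : A) : ‖x * y + y * x‖ ≤ 2 * ‖x‖ * ‖y‖ :=
  calc
    ‖x * y + y * x‖ ≤ ‖x‖ * ‖y‖ + ‖y‖ * ‖x‖ :=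
      norm_add_le_of_le (norm_mul_le x y) (norm_mul_le y x)
    _ = 2 * ‖x‖ * ‖y‖ := by ring

theorem stmt_4_general {p : A} (hp : IsIdempotentElem p) (D a : A) :
    ‖compression p ⁅D, a⁆ - ⁅compression p D, compression p a⁆‖ ≤
      ‖p‖ ^ 2 * (2 * ‖⁅D, p⁆‖ * ‖a‖) := by
  rw [compression_lie_sub_lie_compression hp, norm_neg]
  exact (norm_compression_le p _).trans (by gcongr; exact norm_mul_add_mul_swap_le _ _)

end Norm

/-- Quantitative estimate: in a unital complex normed ring, for an idempotent `p` of
norm at most 1, the defect between the compression of the derivation `[D,·]` and the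
compressed derivation `[pDp,·]` is controlled by `2‖[D,p]‖‖a‖`. -/
theorem stmt_4 {A : Type*} [NormedRing A] [NormedAlgebra ℂ A]
    (p : A) (hp : p * p = p) (hpn : ‖p‖ ≤ 1) :
    ∀ D a : A,
      ‖p * (D * a - a * D) * p - ((p * D * p) * (p * a * p) - (p * a * p) * (p * D * p))‖ ≤
        2 * ‖D * p - p * D‖ * ‖a‖ := fun D a =>
  (stmt_4_general hp D a).trans
    (mul_le_of_le_one_left (by positivity) (pow_le_one₀ (norm_nonneg p) hpn))
end

section
/- Let H be a nontrivial complex Hilbert space, let A and Aₙ (n ∈ ℕ) be bounded self-adjoint operators on H, and let (aₙ) and (bₙ) be sequences of nonnegative real numbers converging to 0 such that ‖(A − Aₙ)f‖ ≤ aₙ‖f‖ + bₙ‖Af‖ for all f ∈ H and all n. Then the Hausdorff distance between the spectrum of Aₙ and the spectrum of A (as compact subsets of ℂ) tends to 0 as n → ∞. -/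
/-!
The relative bound gives `‖A - Aₙ‖ ≤ aₙ + bₙ‖A‖ → 0`, so `Aₙ → A` in norm. For normal operators the
spectrum is `1`-Lipschitz in the Hausdorff distance: by the functional calculus, the resolvent of
`S` at `x` has norm at most `1 / dist(x, σ(S))`, whereas a Neumann series shows that a point
`x ∈ σ(T) \ σ(S)` satisfies `1 ≤ ‖(x - S)⁻¹‖ ‖T - S‖`. Hence `dist(x, σ(S)) ≤ ‖T - S‖` for every
`x ∈ σ(T)`, and one exchanges `S` and `T`.
-/

open Filter

section RelativeBound

variable {𝕜 E F G : Type*} [NontriviallyNormedField 𝕜]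
  [SeminormedAddCommGroup E] [NormedSpace 𝕜 E] [SeminormedAddCommGroup F] [NormedSpace 𝕜 F]
  [SeminormedAddCommGroup G] [NormedSpace 𝕜 G]

theorem opNorm_le_of_relative_bound {B : E →L[𝕜] F} {A : E →L[𝕜] G} {a b : ℝ}
    (ha : 0 ≤ a) (hb : 0 ≤ b) (hB : ∀ f, ‖B f‖ ≤ a * ‖f‖ + b * ‖A f‖) :
    ‖B‖ ≤ a + b * ‖A‖ := by
  refine B.opNorm_le_bound (by positivity) fun f => ?_
  calc
    ‖B f‖ ≤ a * ‖f‖ + b * ‖A f‖ := hB f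
    _ ≤ a * ‖f‖ + b * (‖A‖ * ‖f‖) := by gcongr; exact A.le_opNorm f
    _ = (a + b * ‖A‖) * ‖f‖ := by ring

theorem tendsto_of_relative_bound {ι : Type*} {l : Filter ι} {A : E →L[𝕜] F} {An : ι → E →L[𝕜] F}
    {a b : ι → ℝ} (ha0 : ∀ n, 0 ≤ a n) (hb0 : ∀ n, 0 ≤ b n)
    (ha : Tendsto a l (nhds 0)) (hb : Tendsto b l (nhds 0))
    (hbound : ∀ n f, ‖(A - An n) f‖ ≤ a n * ‖f‖ + b n * ‖A f‖) :
    Tendsto An l (nhds A) := by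
  rw [tendsto_iff_norm_sub_tendsto_zero]
  have hlim : Tendsto (fun n => a n + b n * ‖A‖) l (nhds 0) := by
    simpa using ha.add (hb.mul_const ‖A‖)
  refine squeeze_zero (fun _ => norm_nonneg _) (fun n => ?_) hlim
  rw [norm_sub_rev]
  exact opNorm_le_of_relative_bound (ha0 n) (hb0 n) (hbound n)

end RelativeBound

theorem one_le_norm_resolvent_mul_norm_sub {𝕜 E : Type*} [CommSemiring 𝕜] [NormedRing E]
    [Algebra 𝕜 E] [HasSummableGeomSeries E] {S T : E} {x : 𝕜}
    (hS : x ∈ resolventSet 𝕜 S) (hT : x ∈ spectrum 𝕜 T) :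
    1 ≤ ‖resolvent S x‖ * ‖T - S‖ := by
  by_contra! hlt
  have hsmall : ‖resolvent S x * (T - S)‖ < 1 := (norm_mul_le _ _).trans_lt hlt
  have hfactor : algebraMap 𝕜 E x - T =
      (algebraMap 𝕜 E x - S) * (1 - resolvent S x * (T - S)) := by
    rw [mul_sub, mul_one, ← mul_assoc, resolvent, Ring.mul_inverse_cancel _ hS, one_mul,
      sub_sub_sub_cancel_right]
  refine spectrum.mem_iff.mp hT ?_
  rw [hfactor]
  exact IsUnit.mul hS (isUnit_one_sub_of_norm_lt_one hsmall)

theorem resolvent_eq_cfc {R E : Type*} {p : E → Prop} [Field R] [StarRing R] [MetricSpace R]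
    [IsTopologicalRing R] [ContinuousStar R] [ContinuousInv₀ R] [TopologicalSpace E] [Ring E]
    [StarRing E] [Algebra R E] [ContinuousFunctionalCalculus R E p] {S : E} (hS : p S) {x : R}
    (hx : x ∈ resolventSet R S) : resolvent S x = cfc (fun z => (x - z)⁻¹) S := by
  have hne : ∀ z ∈ spectrum R S, x - z ≠ 0 := by
    rintro z hz hxz
    exact hz (sub_eq_zero.mp hxz ▸ hx)
  rw [cfc_inv (fun z => x - z) S hne, cfc_sub (fun _ => x) (fun z => z) S, cfc_const x S,
    cfc_id' R S, resolvent]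

section IsometricCFC

variable {𝕜 E : Type*} {p : E → Prop} [RCLike 𝕜] [NormedRing E] [StarRing E] [NormedAlgebra 𝕜 E]
  [IsometricContinuousFunctionalCalculus 𝕜 E p] {S T : E}

theorem norm_resolvent_le_inv_infDist_spectrum (hS : p S) {x : 𝕜} (hx : x ∈ resolventSet 𝕜 S) :
    ‖resolvent S x‖ ≤ (Metric.infDist x (spectrum 𝕜 S))⁻¹ := by
  rw [resolvent_eq_cfc hS hx]
  refine norm_cfc_le (inv_nonneg.mpr Metric.infDist_nonneg) fun z hz => ?_
  have hclosed : IsClosed (spectrum 𝕜 S) :=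
    (ContinuousFunctionalCalculus.isCompact_spectrum S).isClosed
  have hpos : 0 < Metric.infDist x (spectrum 𝕜 S) :=
    (hclosed.notMem_iff_infDist_pos ⟨z, hz⟩).mp fun hxS => hxS hx
  rw [norm_inv, ← dist_eq_norm]
  exact inv_anti₀ hpos (Metric.infDist_le_dist_of_mem hz)

variable [HasSummableGeomSeries E]

theorem infDist_spectrum_le_norm_sub (hS : p S) {x : 𝕜} (hx : x ∈ spectrum 𝕜 T) :
    Metric.infDist x (spectrum 𝕜 S) ≤ ‖T - S‖ := by
  rcases (Metric.infDist_nonneg (x := x) (s := spectrum 𝕜 S)).eq_or_lt with hzero | hpos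
  · exact hzero ▸ norm_nonneg _
  have hxS : x ∈ resolventSet 𝕜 S := by
    by_contra hxS
    exact hpos.ne' (Metric.infDist_zero_of_mem hxS)
  have hone : 1 ≤ (Metric.infDist x (spectrum 𝕜 S))⁻¹ * ‖T - S‖ :=
    (one_le_norm_resolvent_mul_norm_sub hxS hx).trans <| by
      gcongr
      exact norm_resolvent_le_inv_infDist_spectrum hS hxS
  rwa [inv_mul_eq_div, one_le_div hpos] at hone

theorem hausdorffDist_spectrum_le_norm_sub (hS : p S) (hT : p T) :
    Metric.hausdorffDist (spectrum 𝕜 S) (spectrum 𝕜 T) ≤ ‖S - T‖ :=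
  Metric.hausdorffDist_le_of_infDist (norm_nonneg _)
    (fun _ hx => infDist_spectrum_le_norm_sub hT hx)
    fun _ hx => norm_sub_rev S T ▸ infDist_spectrum_le_norm_sub hS hx

theorem tendsto_hausdorffDist_spectrum {ι : Type*} {l : Filter ι} {Sn : ι → E}
    (hS : p S) (hSn : ∀ n, p (Sn n)) (hlim : Tendsto Sn l (nhds S)) :
    Tendsto (fun n => Metric.hausdorffDist (spectrum 𝕜 (Sn n)) (spectrum 𝕜 S)) l (nhds 0) :=
  squeeze_zero (fun _ => Metric.hausdorffDist_nonneg)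
    (fun n => hausdorffDist_spectrum_le_norm_sub (hSn n) hS)
    (tendsto_iff_norm_sub_tendsto_zero.mp hlim)

end IsometricCFC

theorem stmt_13_general {H ι : Type*} [NormedAddCommGroup H] [InnerProductSpace ℂ H]
    [CompleteSpace H] {l : Filter ι} (A : H →L[ℂ] H) (An : ι → H →L[ℂ] H)
    (hA : IsStarNormal A) (hAn : ∀ n, IsStarNormal (An n))
    (a b : ι → ℝ) (ha0 : ∀ n, 0 ≤ a n) (hb0 : ∀ n, 0 ≤ b n)
    (ha : Tendsto a l (nhds 0)) (hb : Tendsto b l (nhds 0))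
    (hbound : ∀ n, ∀ f : H, ‖(A - An n) f‖ ≤ a n * ‖f‖ + b n * ‖A f‖) :
    Tendsto (fun n => Metric.hausdorffDist (spectrum ℂ (An n)) (spectrum ℂ A)) l (nhds 0) :=
  tendsto_hausdorffDist_spectrum hA hAn (tendsto_of_relative_bound ha0 hb0 ha hb hbound)

/-- Spectral convergence: if bounded self-adjoint operators `Aₙ` on a nontrivial
complex Hilbert space converge to a bounded self-adjoint operator `A` with relative
bounds `‖(A - Aₙ)f‖ ≤ aₙ‖f‖ + bₙ‖Af‖` given by null sequences `aₙ, bₙ ≥ 0`, then the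
Hausdorff distance between the spectra `σ(Aₙ)` and `σ(A)` tends to `0`. -/
theorem stmt_13 {H : Type*} [NormedAddCommGroup H] [InnerProductSpace ℂ H]
    [CompleteSpace H] [Nontrivial H]
    (A : H →L[ℂ] H) (An : ℕ → H →L[ℂ] H)
    (hA : IsSelfAdjoint A) (hAn : ∀ n, IsSelfAdjoint (An n))
    (a b : ℕ → ℝ) (ha0 : ∀ n, 0 ≤ a n) (hb0 : ∀ n, 0 ≤ b n)
    (ha : Tendsto a atTop (nhds 0)) (hb : Tendsto b atTop (nhds 0))
    (hbound : ∀ n, ∀ f : H, ‖(A - An n) f‖ ≤ a n * ‖f‖ + b n * ‖A f‖) :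
    Tendsto (fun n => Metric.hausdorffDist (spectrum ℂ (An n)) (spectrum ℂ A))
      atTop (nhds 0) := by
  exact stmt_13_general A An hA.isStarNormal (fun n => (hAn n).isStarNormal)
    a b ha0 hb0 ha hb hbound
end
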